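/- Let R > 0, r > 0, and let z be a point of the Euclidean plane ℝ² with v = ‖z‖ > 0. Then the area of b(0,r) ∩ b(z,R) equals π·(min(r, max(R−v, 0)))² + 2·∫_{min(r,|R−v|)}^{min(r,R+v)} u·arccos((u² + v² − R²)/(2 u v)) du. -/

import Mathlib

open MeasureTheory Real

lemma aux_transfer (R r : ℝ) (z : EuclideanSpace ℝ (Fin 2)) (v : ℝ) (hv : v = ‖z‖) (hv0 : 0 < v) :
    volume (Metric.closedBall (0 : EuclideanSpace ℝ (Fin 2)) r ∩ Metric.closedBall z R) =
    volume (Metric.closedBall (0 : ℂ) r ∩ Metric.closedBall (v : ℂ) R) := by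
  let e := Complex.orthonormalBasisOneI.repr
  obtain ⟨w, hw⟩ := e.surjective z
  have hwn : ‖w‖ = v := by rw [hv, ← hw, e.norm_map]
  have hvC : (v : ℂ) ≠ 0 := by exact_mod_cast hv0.ne'
  have hc : ‖w / v‖ = 1 := by
    rw [norm_div, hwn, Complex.norm_real, Real.norm_of_nonneg hv0.le, div_self hv0.ne']
  let a : Circle := ⟨w / v, by simpa [Submonoid.unitSphere] using hc⟩
  let f : ℂ ≃ₗᵢ[ℝ] EuclideanSpace ℝ (Fin 2) := (rotation a).trans e
  have hf : f v = z := by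
    rw [← hw]
    change e (rotation a v) = e w
    rw [rotation_apply]
    congr 1
    exact div_mul_cancel₀ w hvC
  have hmp : MeasurePreserving f := f.measurePreserving
  rw [← hmp.measure_preimage
    (Metric.isClosed_closedBall.inter Metric.isClosed_closedBall).measurableSet.nullMeasurableSet]
  congr 1
  ext x
  simp only [Set.mem_preimage, Set.mem_inter_iff, Metric.mem_closedBall, dist_zero_right]
  rw [f.norm_map, ← hf, f.dist_map]

lemma aux_angle (c : ℝ) :
    volume (Set.Ioo (-π) π ∩ {θ | c ≤ cos θ}) = ENNReal.ofReal (2 * arccos c) := by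
  rcases lt_or_ge 1 c with h1 | h1
  · have : Set.Ioo (-π) π ∩ {θ | c ≤ cos θ} = ∅ := by
      ext θ
      simp only [Set.mem_inter_iff, Set.mem_ofPred_eq, Set.mem_empty_iff_false, iff_false, not_and]
      intro _ h
      linarith [cos_le_one θ]
    rw [this, arccos_of_one_le h1.le]
    simp
  rcases lt_or_ge c (-1) with h2 | h2
  · have : Set.Ioo (-π) π ∩ {θ | c ≤ cos θ} = Set.Ioo (-π) π := by
      apply Set.inter_eq_left.2
      intro θ _
      simp only [Set.mem_ofPred_eq]
      linarith [neg_one_le_cos θ]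
    rw [this, arccos_of_le_neg_one h2.le, Real.volume_Ioo]
    congr 1
    ring
  have hae : (Set.Ioo (-π) π ∩ {θ | c ≤ cos θ} : Set ℝ) =ᵐ[volume]
      (Set.Icc (-π) π ∩ {θ | c ≤ cos θ} : Set ℝ) :=
    Ioo_ae_eq_Icc.inter (ae_eq_refl _)
  rw [measure_congr hae]
  have : Set.Icc (-π) π ∩ {θ | c ≤ cos θ} = Set.Icc (-arccos c) (arccos c) := by
    ext θ
    simp only [Set.mem_inter_iff, Set.mem_ofPred_eq, Set.mem_Icc, ← abs_le]
    constructor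
    · rintro ⟨h, h'⟩
      rw [← cos_abs] at h'
      rw [← arccos_cos (abs_nonneg θ) h]
      exact arccos_le_arccos h'
    · intro h
      refine ⟨h.trans (arccos_le_pi c), ?_⟩
      rw [← cos_abs, ← cos_arccos h2 h1]
      exact cos_le_cos_of_nonneg_of_le_pi (abs_nonneg θ) (arccos_le_pi c) h
  rw [this, Real.volume_Icc]
  congr 1
  ring

lemma aux_mem (R v u θ : ℝ) (hR : 0 < R) (hv0 : 0 < v) (hu : 0 < u) :
    ‖(u : ℂ) * (Real.cos θ + Real.sin θ * Complex.I) - v‖ ≤ R ↔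
      (u ^ 2 + v ^ 2 - R ^ 2) / (2 * u * v) ≤ cos θ := by
  rw [div_le_iff₀ (by positivity), ← abs_of_pos hR, ← abs_norm, ← sq_le_sq, Complex.sq_norm,
    Complex.normSq_apply, abs_of_pos hR]
  simp only [Complex.sub_re, Complex.sub_im, Complex.mul_re, Complex.mul_im, Complex.add_re,
    Complex.add_im, Complex.ofReal_re, Complex.ofReal_im, Complex.I_re, Complex.I_im]
  have h := sin_sq_add_cos_sq θ
  have h2 : u ^ 2 * (sin θ ^ 2 + cos θ ^ 2) = u ^ 2 := by rw [h, mul_one]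
  constructor <;> intro h' <;> nlinarith

lemma aux_int (R v a b : ℝ) : IntervalIntegrable
    (fun u : ℝ => u * arccos ((u ^ 2 + v ^ 2 - R ^ 2) / (2 * u * v))) volume a b := by
  have : IntervalIntegrable (fun u : ℝ => u * π) volume a b :=
    (by fun_prop : Continuous fun u : ℝ => u * π).intervalIntegrable _ _
  refine this.mono_fun ?_ ?_
  · apply Measurable.aestronglyMeasurable
    exact measurable_id.mul (Real.continuous_arccos.measurable.comp (by fun_prop))
  · refine Filter.Eventually.of_forall fun u => ?_
    simp only [norm_mul, Real.norm_eq_abs]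
    rw [abs_of_nonneg (arccos_nonneg _), abs_of_pos pi_pos]
    exact mul_le_mul_of_nonneg_left (arccos_le_pi _) (abs_nonneg _)

lemma aux_polar (R r v : ℝ) (hR : 0 < R) (hr : 0 < r) (hv0 : 0 < v) :
    (volume (Metric.closedBall (0 : ℂ) r ∩ Metric.closedBall (v : ℂ) R)).toReal =
    2 * ∫ u in (0:ℝ)..r, u * arccos ((u ^ 2 + v ^ 2 - R ^ 2) / (2 * u * v)) := by
  set S := Metric.closedBall (0 : ℂ) r ∩ Metric.closedBall (v : ℂ) R with hS
  have hSm : MeasurableSet S :=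
    (Metric.isClosed_closedBall.inter Metric.isClosed_closedBall).measurableSet
  have hcont : Continuous (fun p : ℝ × ℝ => Complex.polarCoord.symm p) := by
    simp only [Complex.polarCoord_symm_apply]
    fun_prop
  have hmeas : Measurable (fun p : ℝ × ℝ => ENNReal.ofReal p.1 •
      S.indicator (1 : ℂ → ENNReal) (Complex.polarCoord.symm p)) := by
    have h1 : Measurable (fun p : ℝ × ℝ => ENNReal.ofReal p.1) := by fun_prop
    have h2 : Measurable (fun p : ℝ × ℝ =>
        S.indicator (1 : ℂ → ENNReal) (Complex.polarCoord.symm p)) :=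
      (measurable_one.indicator hSm).comp hcont.measurable
    exact h1.mul h2
  have key : volume S = ∫⁻ u in Set.Ioc 0 r,
      ENNReal.ofReal (2 * (u * arccos ((u ^ 2 + v ^ 2 - R ^ 2) / (2 * u * v)))) := by
    rw [← lintegral_indicator_one hSm, ← Complex.lintegral_comp_polarCoord_symm, polarCoord_target,
      Measure.volume_eq_prod, ← Measure.prod_restrict, lintegral_prod _ hmeas.aemeasurable]
    have hI : Set.Ioc 0 r = Set.Iic r ∩ Set.Ioi 0 := by
      ext x; simp [and_comm]
    rw [hI, ← Measure.restrict_restrict measurableSet_Iic, ← lintegral_indicator measurableSet_Iic]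
    apply setLIntegral_congr_fun measurableSet_Ioi
    intro u hu
    have hu : 0 < u := hu
    simp only [smul_eq_mul]
    rw [lintegral_const_mul']
    swap
    · exact ENNReal.ofReal_ne_top
    by_cases hur : u ≤ r
    · rw [Set.indicator_of_mem (show u ∈ Set.Iic r from hur)]
      have h1 : ∀ θ : ℝ, S.indicator (1 : ℂ → ENNReal) (Complex.polarCoord.symm (u, θ)) =
          ({θ | (u ^ 2 + v ^ 2 - R ^ 2) / (2 * u * v) ≤ cos θ} : Set ℝ).indicator 1 θ := by
        intro θ
        have : Complex.polarCoord.symm (u, θ) ∈ S ↔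
            θ ∈ ({θ | (u ^ 2 + v ^ 2 - R ^ 2) / (2 * u * v) ≤ cos θ} : Set ℝ) := by
          rw [hS, Set.mem_inter_iff, Metric.mem_closedBall, Metric.mem_closedBall, dist_zero_right,
            Complex.norm_polarCoord_symm, dist_eq_norm, Complex.polarCoord_symm_apply,
            Set.mem_ofPred_eq, ← aux_mem R v u θ hR hv0 hu]
          simp only [abs_of_pos hu, hur, true_and]
        simp only [Set.indicator, this, Pi.one_apply]
      simp only [h1]
      have hm : MeasurableSet ({θ | (u ^ 2 + v ^ 2 - R ^ 2) / (2 * u * v) ≤ cos θ} : Set ℝ) :=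
        measurableSet_le measurable_const measurable_cos
      rw [lintegral_indicator_one hm, Measure.restrict_apply hm, Set.inter_comm, aux_angle,
        ← ENNReal.ofReal_mul hu.le]
      congr 1
      ring
    · rw [Set.indicator_of_notMem (show u ∉ Set.Iic r from hur)]
      have h1 : ∀ θ : ℝ, S.indicator (1 : ℂ → ENNReal) (Complex.polarCoord.symm (u, θ)) = 0 := by
        intro θ
        apply Set.indicator_of_notMem
        rw [hS, Set.mem_inter_iff, Metric.mem_closedBall, dist_zero_right,
            Complex.norm_polarCoord_symm, abs_of_pos hu]
        exact fun h => hur h.1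
      simp only [h1]
      simp
  rw [key, ← intervalIntegral.integral_const_mul, intervalIntegral.integral_of_le hr.le]
  symm
  apply integral_eq_lintegral_of_nonneg_ae
  · refine (ae_restrict_iff' measurableSet_Ioc).2 (Filter.Eventually.of_forall fun u hu => ?_)
    have := arccos_nonneg ((u ^ 2 + v ^ 2 - R ^ 2) / (2 * u * v))
    have := hu.1
    simp only [Pi.zero_apply]
    positivity
  · exact ((aux_int R v 0 r).const_mul 2).1.aestronglyMeasurable

/-- Area of the intersection of the disc `b(0,r)` with the disc `b(z,R)`
(`‖z‖ = v > 0`):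
`v₂(b(0,r) ∩ b(z,R)) = π·(min(r, max(R−v,0)))²
  + 2·∫_{min(r,|R−v|)}^{min(r,R+v)} u·arccos((u²+v²−R²)/(2uv)) du`. -/
theorem area_ball_inter_ball (R r : ℝ) (hR : 0 < R) (hr : 0 < r)
    (z : EuclideanSpace ℝ (Fin 2)) (v : ℝ) (hv : v = ‖z‖) (hv0 : 0 < v) :
    (volume (Metric.closedBall (0 : EuclideanSpace ℝ (Fin 2)) r ∩
        Metric.closedBall z R)).toReal =
      π * (min r (max (R - v) 0)) ^ 2 +
        2 * ∫ u in (min r |R - v|)..(min r (R + v)),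
          u * Real.arccos ((u ^ 2 + v ^ 2 - R ^ 2) / (2 * u * v)) := by
  rw [aux_transfer R r z v hv hv0, aux_polar R r v hR hr hv0]
  set f : ℝ → ℝ := fun u => u * Real.arccos ((u ^ 2 + v ^ 2 - R ^ 2) / (2 * u * v)) with hf
  rw [← intervalIntegral.integral_add_adjacent_intervals (aux_int R v 0 (min r |R - v|))
    (aux_int R v (min r |R - v|) r),
    ← intervalIntegral.integral_add_adjacent_intervals (aux_int R v (min r |R - v|) (min r (R + v)))
    (aux_int R v (min r (R + v)) r)]
  have hm0 : 0 ≤ min r |R - v| := le_min hr.le (abs_nonneg _)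
  have h3 : ∫ u in (min r (R + v))..r, f u = 0 := by
    apply intervalIntegral.integral_zero_ae
    refine Filter.Eventually.of_forall fun u hu => ?_
    rw [Set.uIoc_of_le (min_le_left _ _)] at hu
    have hu1 : R + v < u := (min_lt_iff.1 hu.1).resolve_left (not_lt.2 hu.2)
    have hu0 : 0 < u := by linarith
    have : 1 ≤ (u ^ 2 + v ^ 2 - R ^ 2) / (2 * u * v) := by
      rw [le_div_iff₀ (by positivity)]
      nlinarith
    simp only [hf, arccos_of_one_le this, mul_zero]
  have h1 : 2 * ∫ u in (0:ℝ)..(min r |R - v|), f u = π * (min r (max (R - v) 0)) ^ 2 := by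
    rcases le_total v R with h | h
    · rw [abs_of_nonneg (sub_nonneg.2 h)] at hm0 ⊢
      rw [max_eq_left (sub_nonneg.2 h)]
      have : ∫ u in (0:ℝ)..(min r (R - v)), f u = ∫ u in (0:ℝ)..(min r (R - v)), u * π := by
        apply intervalIntegral.integral_congr_ae
        refine Filter.Eventually.of_forall fun u hu => ?_
        rw [Set.uIoc_of_le hm0] at hu
        have hu0 := hu.1
        have hu1 : u ≤ R - v := hu.2.trans (min_le_right _ _)
        have : (u ^ 2 + v ^ 2 - R ^ 2) / (2 * u * v) ≤ -1 := by
          rw [div_le_iff₀ (by positivity)]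
          nlinarith
        simp only [hf, arccos_of_le_neg_one this]
      rw [this, intervalIntegral.integral_mul_const, integral_id]
      ring
    · rw [max_eq_right (sub_nonpos.2 h), min_eq_right hr.le]
      have : ∫ u in (0:ℝ)..(min r |R - v|), f u = 0 := by
        apply intervalIntegral.integral_zero_ae
        refine Filter.Eventually.of_forall fun u hu => ?_
        rw [Set.uIoc_of_le hm0, abs_of_nonpos (sub_nonpos.2 h)] at hu
        have hu0 := hu.1
        have hu1 : u ≤ -(R - v) := hu.2.trans (min_le_right _ _)
        have : 1 ≤ (u ^ 2 + v ^ 2 - R ^ 2) / (2 * u * v) := by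
          rw [le_div_iff₀ (by positivity)]
          nlinarith
        simp only [hf, arccos_of_one_le this, mul_zero]
      rw [this]
      ring
  change 2 * ((∫ u in (0:ℝ)..(min r |R - v|), f u) +
    ((∫ u in (min r |R - v|)..(min r (R + v)), f u) + ∫ u in (min r (R + v))..r, f u)) = _
  rw [h3, ← h1]
  ring
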